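/- Let D = π₁⋯πₙ with πₖ ≡ 1 (mod 12) distinct primes of ℤ[τ], let D_T be a divisor of D as a subproduct of the πₖ, and let c ∈ O_K be relatively prime to D. Then the Hecke character ψ_{D_T³} attached to E_{D_T³}: y² = x³ + D_T³ satisfies ψ_{D_T³}(6c + D) = (D_T/(6c+D))₂ · (6c + D), where (·/·)₂ is the quadratic residue symbol in K = ℚ(√−3). -/

import Mathlib

noncomputable section

open Complex Real ComplexConjugate

/-- `τ = (−1+√−3)/2`, a primitive cube root of unity. -/
def tau : ℂ := (-1 + Real.sqrt 3 * Complex.I) / 2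

/-- `√−3 = 1 + 2τ`, the square root of `−3` with positive imaginary part. -/
def sqrtm3 : ℂ := Real.sqrt 3 * Complex.I

/-- The ring of integers `O_K = ℤ[τ]` of `K = ℚ(√−3)`, as a subring of `ℂ`. -/
def Eis : Subring ℂ := Subring.closure {tau}

/-- `τ` as an element of `ℤ[τ]`. -/
def tauO : Eis := ⟨tau, Subring.subset_closure rfl⟩

/-- `√−3` as an element of `ℤ[τ]`. -/
def sqrtm3O : Eis := 1 + 2 * tauO

/-- Membership in the lattice `L_ω = ω·ℤ[τ]`. -/
def inLattice (ω : ℝ) (z : ℂ) : Prop := ∃ a : Eis, z = (ω : ℂ) * a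

/-- The Weierstrass `℘`-function of the lattice `L_ω = ω·ℤ[τ]`. -/
def wp (ω : ℝ) (z : ℂ) : ℂ :=
  1 / z ^ 2 + ∑' a : {w : ℂ // inLattice ω w ∧ w ≠ 0},
    (1 / (z - (a : ℂ)) ^ 2 - 1 / (a : ℂ) ^ 2)

/-- The Weierstrass `ζ`-function of the lattice `L_ω = ω·ℤ[τ]`. -/
def wzeta (ω : ℝ) (z : ℂ) : ℂ :=
  1 / z + ∑' a : {w : ℂ // inLattice ω w ∧ w ≠ 0},
    (1 / (z - (a : ℂ)) + 1 / (a : ℂ) + z / (a : ℂ) ^ 2)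

/-- The real cube root of 2, as a complex number. -/
def cbrt2 : ℂ := ((2 : ℝ) ^ ((1 : ℝ) / 3) : ℝ)

/-- The real cube root of 4, as a complex number. -/
def cbrt4 : ℂ := ((4 : ℝ) ^ ((1 : ℝ) / 3) : ℝ)


/-- Characterization of the quadratic residue symbol `(x/d)₂` in `K = ℚ(√−3)`,
taking values in `ℤ[τ]`: it is multiplicative in the denominator, equals `1` on unit
denominators, and on odd prime denominators `p` it is the unique element of `{1, −1}`
congruent to `x^((Np−1)/2)` modulo `p`. -/
def IsQuadSym (q : Eis → Eis → Eis) : Prop :=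
  (∀ x d e, q x (d * e) = q x d * q x e) ∧
  (∀ x u, IsUnit u → q x u = 1) ∧
  (∀ x p, Prime p → IsCoprime p 2 → IsCoprime x p →
    (q x p = 1 ∨ q x p = -1) ∧
    ∀ m : ℕ, Complex.normSq (p : ℂ) = (m : ℝ) → p ∣ (q x p - x ^ ((m - 1) / 2)))

/-- Characterization of the sextic residue symbol `(x/d)₆` in `K = ℚ(√−3)`,
taking values in `ℤ[τ]`: it is multiplicative in the denominator, equals `1` on unit
denominators, and on prime denominators `p` coprime to `6` it is the unique sixth root
of unity congruent to `x^((Np−1)/6)` modulo `p`. -/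
def IsHexSym (h : Eis → Eis → Eis) : Prop :=
  (∀ x d e, h x (d * e) = h x d * h x e) ∧
  (∀ x u, IsUnit u → h x u = 1) ∧
  (∀ x p, Prime p → IsCoprime p 6 → IsCoprime x p →
    (h x p) ^ 6 = 1 ∧
    ∀ m : ℕ, Complex.normSq (p : ℂ) = (m : ℝ) → p ∣ (h x p - x ^ ((m - 1) / 6)))

/-- `ψ` is the Hecke character (Grössencharacter) of `K = ℚ(√−3)` attached to the
elliptic curve `y² = x³ + DT³`, viewed on elements of `O_K = ℤ[τ]` (extended by `0`
off ideals coprime to the conductor `(2√−3·DT)`): it is multiplicative, depends only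
on the ideal generated by its argument, its value divided by its argument depends only
on the argument modulo `2√−3·DT`, and for `α ≡ 1 (mod 6)` coprime to `6·DT` it is given
by `ψ(α) = conj((4DT³/α)₆)·α` (`hex` being the sextic residue symbol). -/
def IsAttachedHecke (DT : Eis) (hex : Eis → Eis → Eis) (ψ : Eis → ℂ) : Prop :=
  (∀ α β, ψ (α * β) = ψ α * ψ β) ∧
  (∀ α, ψ α = 0 ↔ ¬ IsCoprime α (2 * sqrtm3O * DT)) ∧
  (∀ u α, IsUnit u → ψ (u * α) = ψ α) ∧
  (∀ α β, IsCoprime α (2 * sqrtm3O * DT) → IsCoprime β (2 * sqrtm3O * DT) →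
    2 * sqrtm3O * DT ∣ (α - β) → ψ α * (β : ℂ) = ψ β * (α : ℂ)) ∧
  (∀ α, IsCoprime α (6 * DT) → (6 : Eis) ∣ (α - 1) →
    ψ α = conj ((hex (4 * DT ^ 3) α : Eis) : ℂ) * (α : ℂ))

/-- `C` is a complete set of representatives of the residue classes of `ℤ[τ]` modulo `D`
that are relatively prime to `D`. -/
def IsRepSet (D : Eis) (C : Finset Eis) : Prop :=
  (∀ c ∈ C, IsCoprime c D) ∧
  ∀ x : Eis, IsCoprime x D → ∃! c, c ∈ C ∧ D ∣ (x - c)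

/-!
Writing `4 D_T³ = 2² D_T³` splits the sextic symbol as `(4D_T³/α)₆ = (2/α)₃ (D_T/α)₂`, so everything
rests on `(2/α)₃ = 1` for `α ≡ 1 (mod 6)`, a case of cubic reciprocity. For a prime `p ∤ 6` with
cubic residue character `χ`, the Jacobi sum `J(χ, χ)` is an associate of `p` and `-1` modulo `3`, so
`-J(χ, χ)` is the primary associate of `p`; pairing the terms at `x` and `1 - x` shows that
`J(χ, χ) ≡ χ(2) (mod 2)`. By multiplicativity `(2/α)₃` is the cube root of unity congruent modulo
`2` to the primary associate of `α`, which is `α` itself, and so `1`, when `α ≡ 1 (mod 6)`.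
-/

theorem eq_of_pow_eq_one_of_dvd_sub {R : Type*} [CommRing R] [IsDomain R] {a z w : R} {n : ℕ}
    (ha : ¬ IsUnit a) (hn : IsCoprime a n) (hz : z ^ n = 1) (hw : w ^ n = 1) (h : a ∣ z - w) :
    z = w := by
  by_contra hne
  have geom_sum_eq_zero : ∑ i ∈ Finset.range n, z ^ i * w ^ (n - 1 - i) = 0 := by
    refine (mul_eq_zero.mp ?_).resolve_right (sub_ne_zero.mpr hne)
    rw [geom_sum₂_mul, hz, hw, sub_self]
  have dvd_mul_pow : a ∣ n * w ^ (n - 1) :=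
    (dvd_geom_sum₂_iff_of_dvd_sub h).mp (geom_sum_eq_zero ▸ dvd_zero a)
  have hw_unit : IsUnit (w ^ (n - 1)) := by
    refine .pow _ (.of_pow_eq_one hw ?_)
    rintro rfl
    exact ha (isCoprime_zero_right.mp (by simpa only [Nat.cast_zero] using hn))
  exact ha (hn.isUnit_of_dvd' dvd_rfl (hw_unit.dvd_mul_right.mp dvd_mul_pow))

theorem isCoprime_of_dvd_sub_one {R : Type*} [CommRing R] {m a : R} (h : m ∣ a - 1) :
    IsCoprime a m := by
  obtain ⟨b, hb⟩ := h
  exact ⟨1, -b, by linear_combination hb⟩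

theorem isPrimitiveRoot_map {R S : Type*} [CommRing R] [IsDomain R] [CommRing S] [IsDomain S]
    (f : R →+* S) {n : ℕ} [NeZero (n : S)] {ζ : R} (hζ : IsPrimitiveRoot ζ n) :
    IsPrimitiveRoot (f ζ) n := by
  have hn : 0 < n := (NeZero.of_neZero_natCast S).pos
  rw [← Polynomial.isRoot_cyclotomic_iff, ← Polynomial.map_cyclotomic n f]
  exact (hζ.isRoot_cyclotomic hn).map

section FiniteField

variable {F : Type*} [Field F] [Fintype F]

theorem sum_eval_eq_zero_of_natDegree_lt {P : Polynomial F}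
    (hP : P.natDegree < Fintype.card F - 1) : ∑ x : F, P.eval x = 0 := by
  simp only [Polynomial.eval_eq_sum_range]
  rw [Finset.sum_comm]
  refine Finset.sum_eq_zero fun i hi ↦ ?_
  rw [← Finset.mul_sum,
    FiniteField.sum_pow_lt_card_sub_one F i (by have := Finset.mem_range.mp hi; omega), mul_zero]

theorem normSq_jacobiSum {χ φ : MulChar F ℂ} (hχ : χ ≠ 1) (hφ : φ ≠ 1) (hχφ : χ * φ ≠ 1) :
    Complex.normSq (jacobiSum χ φ) = Fintype.card F := by
  have hchar : ringChar ℂ ≠ ringChar F := by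
    rw [ringChar.eq_zero]
    exact (CharP.ringChar_ne_zero_of_finite F).symm
  have hconj : jacobiSum χ⁻¹ φ⁻¹ = conj (jacobiSum χ φ) := by
    simp only [jacobiSum, map_sum, map_mul, ← MulChar.star_apply', starRingEnd_apply]
  have := jacobiSum_mul_jacobiSum_inv hchar hχ hφ hχφ
  rw [hconj, Complex.mul_conj] at this
  exact_mod_cast this

theorem two_dvd_jacobiSum_self_sub {R : Type*} [CommRing R] (χ : MulChar F R) (h2 : (2 : F) ≠ 0) :
    2 ∣ jacobiSum χ χ - χ 2⁻¹ ^ 2 := by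
  classical
  have half_add_half : (2⁻¹ : F) + 2⁻¹ = 1 := by
    rw [← two_mul, mul_inv_cancel₀ h2]
  have eq_half {x : F} (hx : 1 - x = x) : x = 2⁻¹ :=
    mul_left_cancel₀ h2 (by linear_combination -hx - half_add_half)
  have hsum : jacobiSum χ χ - χ 2⁻¹ ^ 2 =
      ∑ x ∈ Finset.univ.erase (2⁻¹ : F), χ x * χ (1 - x) := by
    rw [jacobiSum, ← Finset.add_sum_erase _ _ (Finset.mem_univ (2⁻¹ : F)),
      sub_eq_of_eq_add' half_add_half.symm]
    ring
  -- The involution `x ↦ 1 - x` pairs up the remaining terms.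
  rw [hsum, ← Ideal.mem_span_singleton, ← Ideal.Quotient.eq_zero_iff_mem, map_sum]
  refine Finset.sum_involution (fun x _ ↦ 1 - x) (fun x _ ↦ ?_) (fun x hx _ hfix ↦ ?_)
    (fun x hx ↦ ?_) (fun x _ ↦ sub_sub_cancel 1 x)
  · rw [sub_sub_cancel, ← map_add, Ideal.Quotient.eq_zero_iff_mem, Ideal.mem_span_singleton]
    exact ⟨χ x * χ (1 - x), by ring⟩
  · exact Finset.ne_of_mem_erase hx (eq_half hfix)
  · refine Finset.mem_erase.mpr ⟨fun h ↦ Finset.ne_of_mem_erase hx ?_, Finset.mem_univ _⟩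
    linear_combination -h - half_add_half

end FiniteField

section PowerResidueChar

variable {R F : Type*} [CommRing R] [Field F] [Fintype F] {f : R →+* F} {m n : ℕ}
  {χ : MulChar F R}

/-- `χ` is the `n`-th power residue character of the finite field `F`, with values in a ring `R`
reducing to `F` along `f`: its values are `n`-th roots of unity in `R` (or `0`), determined by the
Euler criterion `χ(a) ≡ a ^ ((#F - 1) / n)`. -/
structure IsPowerResidueChar (f : R →+* F) (n : ℕ) (χ : MulChar F R) : Prop where
  dvd_card_sub_one : n ∣ Fintype.card F - 1
  pow_eq_one : χ ^ n = 1
  map_apply (a : F) : f (χ a) = a ^ ((Fintype.card F - 1) / n)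

theorem exists_isPowerResidueChar {ζ : R} (hζ : ζ ^ n = 1) (hfζ : IsPrimitiveRoot (f ζ) n)
    (hn : n ≠ 0) : ∃ χ : MulChar F R, IsPowerResidueChar f n χ := by
  classical
  have hcard : 0 < Fintype.card F - 1 := Nat.sub_pos_of_lt Fintype.one_lt_card
  obtain ⟨k, hk⟩ : n ∣ Fintype.card F - 1 :=
    hfζ.dvd_of_pow_eq_one _ (FiniteField.pow_card_sub_one_eq_one _ (hfζ.ne_zero hn))
  have hk0 : k ≠ 0 := right_ne_zero_of_mul (hk ▸ hcard.ne')
  have : NeZero n := ⟨hn⟩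
  obtain ⟨g, hg⟩ := IsCyclic.exists_generator (α := Fˣ)
  have hgk : ((g : F) ^ k) ^ n = 1 := by
    rw [← pow_mul, mul_comm, ← hk, FiniteField.pow_card_sub_one_eq_one _ g.ne_zero]
  obtain ⟨i, -, hi⟩ := hfζ.eq_pow_of_pow_eq_one hgk
  let ξ : Rˣ := Units.ofPowEqOne ζ n hζ hn ^ i
  have hξ : ξ ^ n = 1 := by rw [← pow_mul, mul_comm, pow_mul, Units.pow_ofPowEqOne, one_pow]
  have hξ_mem : ξ ∈ rootsOfUnity (Fintype.card Fˣ) R := by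
    rw [_root_.mem_rootsOfUnity, Fintype.card_units, hk, pow_mul, hξ, one_pow]
  let χ := MulChar.ofRootOfUnity hξ_mem hg
  have hχg : χ g = ξ := MulChar.ofRootOfUnity_spec hξ_mem hg
  have hfχg : f (χ g) = (g : F) ^ k := by
    rw [hχg, Units.val_pow_eq_pow_val, Units.val_ofPowEqOne, map_pow, hi]
  refine ⟨χ, ⟨k, hk⟩, ?_, fun a ↦ ?_⟩
  · rw [MulChar.eq_iff hg, MulChar.pow_apply_coe, hχg, MulChar.one_apply_coe]
    exact congrArg Units.val hξ
  · rw [hk, Nat.mul_div_cancel_left k (Nat.pos_of_ne_zero hn)]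
    rcases eq_or_ne a 0 with rfl | ha
    · rw [MulChar.map_zero, map_zero, zero_pow hk0]
    · obtain ⟨j, hj⟩ := (mem_powers_iff_mem_zpowers (x := g)).mpr (hg (Units.mk0 a ha))
      obtain rfl : (g : F) ^ j = a := congrArg Units.val hj
      rw [map_pow, map_pow, hfχg, pow_right_comm]

namespace IsPowerResidueChar

theorem exists_card_sub_one_eq_mul (h : IsPowerResidueChar f n χ) :
    ∃ k, 0 < k ∧ Fintype.card F - 1 = n * k ∧ ∀ a, f (χ a) = a ^ k := by
  have hcard : 0 < Fintype.card F - 1 := Nat.sub_pos_of_lt Fintype.one_lt_card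
  obtain ⟨k, hk⟩ := h.dvd_card_sub_one
  rw [hk, CanonicallyOrderedAdd.mul_pos] at hcard
  refine ⟨k, hcard.2, hk, fun a ↦ ?_⟩
  rw [h.map_apply, hk, Nat.mul_div_cancel_left k hcard.1]

theorem ne_zero (h : IsPowerResidueChar f n χ) : n ≠ 0 := by
  rintro rfl
  exact (Nat.sub_pos_of_lt Fintype.one_lt_card).ne' (zero_dvd_iff.mp h.dvd_card_sub_one)

theorem pow (h : IsPowerResidueChar f (m * n) χ) : IsPowerResidueChar f n (χ ^ m) where
  dvd_card_sub_one := (Dvd.intro_left m rfl).trans h.dvd_card_sub_one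
  pow_eq_one := by rw [← pow_mul, h.pow_eq_one]
  map_apply a := by
    obtain ⟨k, -, hk, hmap⟩ := h.exists_card_sub_one_eq_mul
    have hn : 0 < n := Nat.pos_of_ne_zero (right_ne_zero_of_mul h.ne_zero)
    rw [MulChar.pow_apply' χ (left_ne_zero_of_mul h.ne_zero), map_pow, hmap, ← pow_mul, hk,
      mul_comm m n, mul_assoc, Nat.mul_div_cancel_left _ hn, mul_comm k m]

theorem apply_pow_eq_one (h : IsPowerResidueChar f n χ) {a : F} (ha : a ≠ 0) : χ a ^ n = 1 := by
  rw [← MulChar.pow_apply' χ h.ne_zero, h.pow_eq_one, MulChar.one_apply ha.isUnit]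

theorem orderOf_eq (h : IsPowerResidueChar f n χ) : orderOf χ = n := by
  classical
  refine Nat.dvd_antisymm (orderOf_dvd_of_pow_eq_one h.pow_eq_one) ?_
  obtain ⟨k, hk0, hk, hmap⟩ := h.exists_card_sub_one_eq_mul
  obtain ⟨g, hg⟩ := IsCyclic.exists_generator (α := Fˣ)
  have hpow : g ^ (k * orderOf χ) = 1 := by
    ext
    rw [pow_mul, Units.val_pow_eq_pow_val, Units.val_pow_eq_pow_val, ← hmap, ← map_pow,
      ← MulChar.pow_apply_coe, pow_orderOf_eq_one, MulChar.one_apply_coe, map_one, Units.val_one]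
  have hdvd := orderOf_dvd_of_pow_eq_one hpow
  rw [orderOf_eq_card_of_forall_mem_zpowers hg, Nat.card_eq_fintype_card, Fintype.card_units,
    hk, mul_comm n] at hdvd
  exact Nat.dvd_of_mul_dvd_mul_left hk0 hdvd

theorem map_jacobiSum_self (h : IsPowerResidueChar f n χ) (hn : 2 < n) :
    f (jacobiSum χ χ) = 0 := by
  obtain ⟨k, hk0, hk, hmap⟩ := h.exists_card_sub_one_eq_mul
  let P : Polynomial F := .X ^ k * (1 - .X) ^ k
  have hdeg : P.natDegree < Fintype.card F - 1 := calc
    P.natDegree ≤ k + k := by unfold P; compute_degree!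
    _ = 2 * k := (two_mul k).symm
    _ < n * k := Nat.mul_lt_mul_of_pos_right hn hk0
    _ = Fintype.card F - 1 := hk.symm
  calc f (jacobiSum χ χ) = ∑ x : F, P.eval x := by simp [jacobiSum, hmap, P]
    _ = 0 := sum_eval_eq_zero_of_natDegree_lt hdeg

end IsPowerResidueChar

end PowerResidueChar

namespace Eis

theorem tauO_mul_self : tauO * tauO = -1 - tauO := by
  have h : (Real.sqrt 3 : ℂ) ^ 2 = 3 := by exact_mod_cast Real.sq_sqrt zero_le_three
  refine Subtype.ext (?_ : tau * tau = -1 - tau)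
  unfold tau
  linear_combination (Real.sqrt 3 : ℂ) ^ 2 / 4 * Complex.I_sq - h / 4

/-- The homomorphism `ℤ[X] / (X² + X + 1) → ℤ[τ]` sending the class of `X` to `τ`; the element
`⟨a, b⟩` of the source stands for `a + bX`. -/
def ofQuadraticAlgebra : QuadraticAlgebra ℤ (-1) (-1) →ₐ[ℤ] Eis :=
  QuadraticAlgebra.lift ⟨tauO, by rw [tauO_mul_self]; module⟩

theorem coe_ofQuadraticAlgebra (x : QuadraticAlgebra ℤ (-1) (-1)) :
    (ofQuadraticAlgebra x : ℂ) = x.re + x.im * tau := by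
  simp [ofQuadraticAlgebra, QuadraticAlgebra.lift, tauO]

theorem ofQuadraticAlgebra_re (x : QuadraticAlgebra ℤ (-1) (-1)) :
    (ofQuadraticAlgebra x : ℂ).re = x.re - x.im / 2 := by
  simp [coe_ofQuadraticAlgebra, tau, sub_eq_add_neg, div_eq_mul_inv]

theorem ofQuadraticAlgebra_im (x : QuadraticAlgebra ℤ (-1) (-1)) :
    (ofQuadraticAlgebra x : ℂ).im = x.im * (Real.sqrt 3 / 2) := by
  simp [coe_ofQuadraticAlgebra, tau]

theorem normSq_ofQuadraticAlgebra (x : QuadraticAlgebra ℤ (-1) (-1)) :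
    Complex.normSq (ofQuadraticAlgebra x) = (x.norm : ℤ) := by
  have h : Real.sqrt 3 ^ 2 = 3 := Real.sq_sqrt zero_le_three
  rw [Complex.normSq_apply, ofQuadraticAlgebra_re, ofQuadraticAlgebra_im, QuadraticAlgebra.norm_def]
  push_cast
  linear_combination x.im ^ 2 / 4 * h

theorem ofQuadraticAlgebra_injective : Function.Injective ofQuadraticAlgebra := by
  refine (injective_iff_map_eq_zero _).mpr fun x hx ↦ ?_
  have him : x.im = 0 := by simpa [hx] using ofQuadraticAlgebra_im x
  have hre : x.re = 0 := by simpa [hx, him] using (ofQuadraticAlgebra_re x).symm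
  exact QuadraticAlgebra.ext hre him

theorem ofQuadraticAlgebra_surjective : Function.Surjective ofQuadraticAlgebra := by
  have hle : Eis ≤ (Eis.subtype.comp ofQuadraticAlgebra.toRingHom).range := by
    refine Subring.closure_le.mpr (Set.singleton_subset_iff.mpr ⟨⟨0, 1⟩, ?_⟩)
    simpa using coe_ofQuadraticAlgebra ⟨0, 1⟩
  intro x
  obtain ⟨y, hy⟩ := hle x.2
  exact ⟨y, Subtype.ext hy⟩

/-- The isomorphism `ℤ[X] / (X² + X + 1) ≅ ℤ[τ]` sending the class of `X` to `τ`. -/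
def quadraticAlgebraEquiv : QuadraticAlgebra ℤ (-1) (-1) ≃ₐ[ℤ] Eis :=
  .ofBijective ofQuadraticAlgebra ⟨ofQuadraticAlgebra_injective, ofQuadraticAlgebra_surjective⟩

instance : Module.Free ℤ Eis := .of_equiv quadraticAlgebraEquiv.toLinearEquiv

instance : Module.Finite ℤ Eis := .equiv quadraticAlgebraEquiv.toLinearEquiv

/-- The norm of `ℤ[τ]` over `ℤ`, which is nonnegative, as a natural number: the square of the
complex absolute value. -/
def absNorm : Eis →* ℕ := Int.natAbsHom.toMonoidHom.comp (Algebra.norm ℤ)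

theorem absNorm_apply (x : Eis) : absNorm x = (Algebra.norm ℤ x).natAbs := rfl

theorem norm_ofQuadraticAlgebra (x : QuadraticAlgebra ℤ (-1) (-1)) :
    Algebra.norm ℤ (ofQuadraticAlgebra x) = x.norm := by
  rw [← QuadraticAlgebra.det_toLinearMap_eq_norm]
  exact Algebra.norm_eq_of_algEquiv quadraticAlgebraEquiv x

theorem normSq_coe (x : Eis) : Complex.normSq x = absNorm x := by
  obtain ⟨y, rfl⟩ := ofQuadraticAlgebra_surjective x
  have hnonneg : (0 : ℝ) ≤ (y.norm : ℤ) := normSq_ofQuadraticAlgebra y ▸ Complex.normSq_nonneg _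
  rw [normSq_ofQuadraticAlgebra, absNorm_apply, norm_ofQuadraticAlgebra, Nat.cast_natAbs,
    abs_of_nonneg (Int.cast_nonneg_iff.mp hnonneg)]

theorem absNorm_eq_zero {x : Eis} : absNorm x = 0 ↔ x = 0 := by
  rw [absNorm_apply, Int.natAbs_eq_zero, Algebra.norm_eq_zero_iff]

theorem absNorm_eq_one {x : Eis} : absNorm x = 1 ↔ IsUnit x := by
  obtain ⟨y, rfl⟩ := quadraticAlgebraEquiv.surjective x
  rw [MulEquiv.isUnit_map, QuadraticAlgebra.isUnit_iff_norm_isUnit, Int.isUnit_iff_natAbs_eq,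
    ← norm_ofQuadraticAlgebra]
  rfl

theorem exists_normSq_sub_lt_one (z : ℂ) : ∃ w : Eis, Complex.normSq (z - w) < 1 := by
  have h : Real.sqrt 3 ^ 2 = 3 := Real.sq_sqrt zero_le_three
  let s := z.im / (Real.sqrt 3 / 2)
  let b := round s
  let a := round (z.re + b / 2)
  have hb : (s - b) ^ 2 ≤ (1 / 2) ^ 2 := sq_le_sq.mpr ((abs_sub_round s).trans (le_abs_self _))
  have ha : (z.re + b / 2 - a) ^ 2 ≤ (1 / 2) ^ 2 :=
    sq_le_sq.mpr ((abs_sub_round _).trans (le_abs_self _))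
  refine ⟨ofQuadraticAlgebra ⟨a, b⟩, ?_⟩
  calc Complex.normSq (z - ofQuadraticAlgebra ⟨a, b⟩)
      = (z.re + b / 2 - a) ^ 2 + 3 / 4 * (s - b) ^ 2 := by
        have him : z.im = s * (Real.sqrt 3 / 2) := (div_mul_cancel₀ _ (by positivity)).symm
        rw [Complex.normSq_apply, Complex.sub_re, Complex.sub_im, ofQuadraticAlgebra_re,
          ofQuadraticAlgebra_im, him]
        linear_combination (s - b) ^ 2 / 4 * h
    _ < 1 := by linarith

theorem exists_absNorm_sub_mul_lt (x : Eis) {y : Eis} (hy : y ≠ 0) :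
    ∃ q, absNorm (x - y * q) < absNorm y := by
  have hy' : (y : ℂ) ≠ 0 := by exact_mod_cast hy
  obtain ⟨q, hq⟩ := exists_normSq_sub_lt_one (x / y)
  refine ⟨q, (Nat.cast_lt (α := ℝ)).mp ?_⟩
  calc (absNorm (x - y * q) : ℝ) = Complex.normSq (y * (x / y - q)) := by
        rw [← normSq_coe, mul_sub, mul_div_cancel₀ _ hy']
        push_cast; rfl
    _ < absNorm y := by
        rw [Complex.normSq_mul, ← normSq_coe]
        exact mul_lt_of_lt_one_right (Complex.normSq_pos.mpr hy') hq

/-- The Euclidean structure on `ℤ[τ]` given by the absolute norm. -/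
abbrev euclideanDomain : EuclideanDomain Eis where
  __ := (inferInstance : CommRing Eis)
  __ := (inferInstance : Nontrivial Eis)
  quotient x y := if hy : y = 0 then 0 else (exists_absNorm_sub_mul_lt x hy).choose
  remainder x y := if hy : y = 0 then x else x - y * (exists_absNorm_sub_mul_lt x hy).choose
  quotient_zero := by simp
  quotient_mul_add_remainder_eq x y := by
    by_cases hy : y = 0 <;> simp [hy]
  r x y := absNorm x < absNorm y
  r_wellFounded := (measure absNorm).wf
  remainder_lt x {y} hy := by simpa [hy] using (exists_absNorm_sub_mul_lt x hy).choose_spec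
  mul_left_not_lt x y hy := by
    rw [map_mul, not_lt]
    exact Nat.le_mul_of_pos_right _ (Nat.pos_of_ne_zero (absNorm_eq_zero.not.mpr hy))

instance : IsPrincipalIdealRing Eis := @EuclideanDomain.to_principal_ideal_domain _ euclideanDomain

theorem natCard_quotient_span_singleton (x : Eis) :
    Nat.card (Eis ⧸ Ideal.span {x}) = absNorm x :=
  Ideal.absNorm_span_singleton x

theorem associated_of_dvd_of_absNorm_eq {x y : Eis} (h : x ∣ y)
    (hxy : absNorm x = absNorm y) : Associated x y := by
  obtain ⟨u, rfl⟩ := h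
  rcases eq_or_ne x 0 with rfl | hx
  · rw [zero_mul]
  · rw [map_mul, left_eq_mul₀ (absNorm_eq_zero.not.mpr hx), absNorm_eq_one] at hxy
    exact associated_mul_unit_right x u hxy

theorem absNorm_natCast (n : ℕ) : absNorm n = n ^ 2 := by
  have h : (absNorm n : ℝ) = n ^ 2 := by rw [← normSq_coe, sq]; exact Complex.normSq_natCast n
  exact_mod_cast h

theorem not_isUnit_two : ¬ IsUnit (2 : Eis) := by
  rw [← absNorm_eq_one, ← Nat.cast_two, absNorm_natCast]
  decide

theorem eq_one_of_isUnit_of_three_dvd_sub_one {u : Eis} (hu : IsUnit u) (h : 3 ∣ u - 1) :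
    u = 1 := by
  obtain ⟨v, hv⟩ := h
  have norm_sq (x : Eis) : ‖(x : ℂ)‖ ^ 2 = absNorm x := by
    rw [← Complex.normSq_eq_norm_sq, normSq_coe]
  have hu_norm : ‖(u : ℂ)‖ = 1 := by
    rw [← pow_eq_one_iff_of_nonneg (norm_nonneg _) two_ne_zero, norm_sq, absNorm_eq_one.mpr hu,
      Nat.cast_one]
  have hv_lt : absNorm v < 1 := by
    suffices (9 * absNorm v : ℝ) < 9 by exact_mod_cast (by linarith : (absNorm v : ℝ) < 1)
    calc (9 * absNorm v : ℝ) = ‖(u : ℂ) - 1‖ ^ 2 := by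
          rw [← Subring.coe_one, ← AddSubgroupClass.coe_sub, norm_sq, hv, map_mul,
            ← Nat.cast_three, absNorm_natCast]
          norm_num
      _ ≤ (1 + 1) ^ 2 := by
          gcongr
          simpa only [hu_norm, norm_one] using norm_sub_le (u : ℂ) 1
      _ < 9 := by norm_num
  rwa [absNorm_eq_zero.mp (Nat.lt_one_iff.mp hv_lt), mul_zero, sub_eq_zero] at hv

theorem eq_of_associated_of_three_dvd_sub_one {x y : Eis} (h : Associated x y)
    (hx : 3 ∣ x - 1) (hy : 3 ∣ y - 1) : x = y := by
  obtain ⟨u, rfl⟩ := h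
  have hu : (3 : Eis) ∣ u - 1 := by
    have := hy.sub (hx.mul_right (u : Eis))
    ring_nf at this ⊢
    exact this
  rw [eq_one_of_isUnit_of_three_dvd_sub_one u.isUnit hu, mul_one]

theorem isPrimitiveRoot_tauO : IsPrimitiveRoot tauO 3 := by
  rw [← Polynomial.isRoot_cyclotomic_iff, Polynomial.cyclotomic_three]
  simp [Polynomial.IsRoot, pow_two, tauO_mul_self]

theorem isPrimitiveRoot_neg_tauO : IsPrimitiveRoot (-tauO) 6 := by
  rw [← Polynomial.isRoot_cyclotomic_iff, Polynomial.cyclotomic_six]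
  simp [Polynomial.IsRoot, pow_two, tauO_mul_self]

/-- `f` is a reduction map from `ℤ[τ]` onto a field `F`, identified with the residue field
`ℤ[τ] / (p)`. -/
structure IsReduction {F : Type*} [Field F] (p : Eis) (f : Eis →+* F) : Prop where
  surjective : Function.Surjective f
  ker_eq : RingHom.ker f = Ideal.span {p}

theorem exists_isReduction {p : Eis} (hp : Prime p) :
    ∃ (F : Type) (_ : Field F) (_ : Fintype F) (f : Eis →+* F), IsReduction p f := by
  have : (Ideal.span {p}).IsMaximal := PrincipalIdealRing.isMaximal_of_irreducible hp.irreducible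
  have : Finite (Eis ⧸ Ideal.span {p}) :=
    Ideal.finiteQuotientOfFreeOfNeBot _ (Ideal.span_singleton_eq_bot.not.mpr hp.ne_zero)
  let _ := Ideal.Quotient.field (Ideal.span {p})
  exact ⟨Eis ⧸ Ideal.span {p}, inferInstance, Fintype.ofFinite _, Ideal.Quotient.mk _,
    Ideal.Quotient.mk_surjective, Ideal.mk_ker⟩

section IsReduction

variable {F : Type*} [Field F] {p : Eis} {f : Eis →+* F}

theorem IsReduction.map_eq_zero_iff (h : IsReduction p f) {x : Eis} : f x = 0 ↔ p ∣ x := by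
  rw [← RingHom.mem_ker, h.ker_eq, Ideal.mem_span_singleton]

theorem IsReduction.map_ne_zero_of_isCoprime (h : IsReduction p f) {x : Eis} (hx : IsCoprime x p) :
    f x ≠ 0 := by
  have hunit := hx.map f
  rw [h.map_eq_zero_iff.mpr dvd_rfl, isCoprime_zero_right] at hunit
  exact hunit.ne_zero

theorem IsReduction.card_eq_absNorm [Fintype F] (h : IsReduction p f) :
    Fintype.card F = absNorm p := by
  rw [← natCard_quotient_span_singleton, ← h.ker_eq, ← Nat.card_eq_fintype_card,
    Nat.card_congr (RingHom.quotientKerEquivOfSurjective h.surjective).toEquiv]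

end IsReduction

end Eis

section CubicCharacter

variable {F : Type*} [Field F] [Fintype F] {p : Eis} {f : Eis →+* F} {χ φ : MulChar F Eis}

theorem Eis.absNorm_jacobiSum (hχ : χ ≠ 1) (hφ : φ ≠ 1) (hχφ : χ * φ ≠ 1) :
    Eis.absNorm (jacobiSum χ φ) = Fintype.card F := by
  have hinj : Function.Injective Eis.subtype := Subtype.val_injective
  have h := normSq_jacobiSum ((MulChar.ringHomComp_ne_one_iff hinj).mpr hχ)
    ((MulChar.ringHomComp_ne_one_iff hinj).mpr hφ)
    (MulChar.ringHomComp_mul χ φ Eis.subtype ▸ (MulChar.ringHomComp_ne_one_iff hinj).mpr hχφ)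
  rw [jacobiSum_ringHomComp] at h
  exact_mod_cast (Eis.normSq_coe _).symm.trans h

theorem IsPowerResidueChar.associated_jacobiSum_self (hχ : IsPowerResidueChar f 3 χ)
    (hf : Eis.IsReduction p f) : Associated p (jacobiSum χ χ) := by
  have hχ_one : χ ≠ 1 := by
    rw [Ne, ← orderOf_eq_one_iff, hχ.orderOf_eq]
    decide
  have hχ_sq : χ * χ ≠ 1 := by
    rw [← sq, Ne, ← orderOf_dvd_iff_pow_eq_one, hχ.orderOf_eq]
    decide
  refine Eis.associated_of_dvd_of_absNorm_eq ?_ ?_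
  · exact hf.map_eq_zero_iff.mp (hχ.map_jacobiSum_self (by decide))
  · rw [Eis.absNorm_jacobiSum hχ_one hχ_one hχ_sq, hf.card_eq_absNorm]

theorem IsPowerResidueChar.three_dvd_jacobiSum_self_add_one (hχ : IsPowerResidueChar f 3 χ) :
    3 ∣ jacobiSum χ χ + 1 := by
  obtain ⟨z, -, hz⟩ := exists_jacobiSum_eq_neg_one_add (by decide) hχ.pow_eq_one hχ.pow_eq_one
    hχ.dvd_card_sub_one Eis.isPrimitiveRoot_tauO
  exact ⟨-z * tauO, by linear_combination hz + z * Eis.tauO_mul_self⟩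

theorem IsPowerResidueChar.two_dvd_jacobiSum_self_sub (hχ : IsPowerResidueChar f 3 χ)
    (h2 : (2 : F) ≠ 0) : 2 ∣ jacobiSum χ χ - χ 2 := by
  have hinv : χ 2⁻¹ ^ 2 = χ 2 := by
    have hone : χ 2⁻¹ ^ 3 = 1 := hχ.apply_pow_eq_one (inv_ne_zero h2)
    have hmul : χ 2⁻¹ * χ 2 = 1 := by rw [← map_mul, inv_mul_cancel₀ h2, map_one]
    linear_combination χ 2 * hone - χ 2⁻¹ ^ 2 * hmul
  exact hinv ▸ _root_.two_dvd_jacobiSum_self_sub χ h2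

end CubicCharacter

/-- `ω` is the cube root of unity congruent modulo `2` to the primary associate of `α`, i.e. to the
associate congruent to `1` modulo `3`. By cubic reciprocity it is the cubic residue symbol
`(2/α)₃`. -/
def IsCubicSymTwo (α ω : Eis) : Prop :=
  ω ^ 3 = 1 ∧ ∃ β, Associated α β ∧ 3 ∣ β - 1 ∧ 2 ∣ β - ω

namespace IsCubicSymTwo

theorem one_of_isUnit {u : Eis} (hu : IsUnit u) : IsCubicSymTwo u 1 :=
  ⟨one_pow 3, 1, associated_one_iff_isUnit.mpr hu, by simp, by simp⟩

theorem mul {α α' ω ω' : Eis} (h : IsCubicSymTwo α ω) (h' : IsCubicSymTwo α' ω') :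
    IsCubicSymTwo (α * α') (ω * ω') := by
  obtain ⟨hω, β, hαβ, hβ3, hβ2⟩ := h
  obtain ⟨hω', β', hαβ', hβ'3, hβ'2⟩ := h'
  refine ⟨by rw [mul_pow, hω, hω', one_mul], β * β', hαβ.mul_mul hαβ', ?_, ?_⟩
  · simpa only [mul_one] using dvd_mul_sub_mul hβ3 hβ'3
  · exact dvd_mul_sub_mul hβ2 hβ'2

theorem of_isPowerResidueChar {F : Type*} [Field F] [Fintype F] {p : Eis} {f : Eis →+* F}
    {χ : MulChar F Eis} (hf : Eis.IsReduction p f) (hχ : IsPowerResidueChar f 3 χ)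
    (h2 : (2 : F) ≠ 0) : IsCubicSymTwo p (χ 2) := by
  refine ⟨hχ.apply_pow_eq_one h2, -jacobiSum χ χ,
    (hχ.associated_jacobiSum_self hf).neg_right, ?_, ?_⟩
  · rw [← neg_add', dvd_neg]
    exact hχ.three_dvd_jacobiSum_self_add_one
  · obtain ⟨t, ht⟩ := hχ.two_dvd_jacobiSum_self_sub h2
    exact ⟨-t - χ 2, by linear_combination -ht⟩

theorem eq_one_of_six_dvd_sub_one {α ω : Eis} (h : IsCubicSymTwo α ω) (hα : 6 ∣ α - 1) : ω = 1 := by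
  obtain ⟨hω, β, hαβ, hβ3, hβ2⟩ := h
  have h6 : (6 : Eis) = 2 * 3 := by norm_num
  rw [h6] at hα
  obtain rfl := Eis.eq_of_associated_of_three_dvd_sub_one hαβ (dvd_of_mul_left_dvd hα) hβ3
  have hdvd : (2 : Eis) ∣ ω - 1 := by
    simpa only [sub_sub_sub_cancel_left] using (dvd_of_mul_right_dvd hα).sub hβ2
  exact eq_of_pow_eq_one_of_dvd_sub Eis.not_isUnit_two ⟨-1, 1, by norm_num⟩ hω (one_pow 3) hdvd

end IsCubicSymTwo

section PrimeDenominator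

variable {F : Type*} [Field F] [Fintype F] {p x : Eis} {f : Eis →+* F} {n : ℕ}
  {χ : MulChar F Eis}

theorem Eis.IsReduction.eq_apply_of_isPowerResidueChar {z : Eis} (hf : Eis.IsReduction p f)
    (hχ : IsPowerResidueChar f n χ) (hpn : IsCoprime p n) (hx : IsCoprime x p) (hz : z ^ n = 1)
    (hpz : p ∣ z - x ^ ((Eis.absNorm p - 1) / n)) : z = χ (f x) := by
  have hp : ¬ IsUnit p := fun hp ↦ (hp.map f).ne_zero (hf.map_eq_zero_iff.mpr dvd_rfl)
  refine eq_of_pow_eq_one_of_dvd_sub hp hpn hz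
    (hχ.apply_pow_eq_one (hf.map_ne_zero_of_isCoprime hx)) ?_
  rw [← hf.map_eq_zero_iff, map_sub] at hpz ⊢
  rw [hχ.map_apply, hf.card_eq_absNorm, ← map_pow, hpz]

theorem IsHexSym.eq_apply {hexSym : Eis → Eis → Eis} (hhex : IsHexSym hexSym) (hp : Prime p)
    (hp6 : IsCoprime p 6) (hx : IsCoprime x p) (hf : Eis.IsReduction p f)
    (hχ : IsPowerResidueChar f 6 χ) : hexSym x p = χ (f x) := by
  obtain ⟨hpow, hdvd⟩ := hhex.2.2 x p hp hp6 hx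
  exact hf.eq_apply_of_isPowerResidueChar hχ (mod_cast hp6) hx hpow (hdvd _ (Eis.normSq_coe p))

theorem IsQuadSym.eq_apply {quadSym : Eis → Eis → Eis} (hquad : IsQuadSym quadSym) (hp : Prime p)
    (hp2 : IsCoprime p 2) (hx : IsCoprime x p) (hf : Eis.IsReduction p f)
    (hχ : IsPowerResidueChar f 2 χ) : quadSym x p = χ (f x) := by
  obtain ⟨hone, hdvd⟩ := hquad.2.2 x p hp hp2 hx
  exact hf.eq_apply_of_isPowerResidueChar hχ (mod_cast hp2) hx (sq_eq_one_iff.mpr hone)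
    (hdvd _ (Eis.normSq_coe p))

theorem Eis.exists_isPowerResidueChar_six (f : Eis →+* F) (h6 : (6 : F) ≠ 0) :
    ∃ χ : MulChar F Eis, IsPowerResidueChar f 6 χ := by
  have : NeZero ((6 : ℕ) : F) := ⟨by exact_mod_cast h6⟩
  exact exists_isPowerResidueChar Eis.isPrimitiveRoot_neg_tauO.pow_eq_one
    (isPrimitiveRoot_map f Eis.isPrimitiveRoot_neg_tauO) (by decide)

end PrimeDenominator

section Symbols

variable {quadSym hexSym : Eis → Eis → Eis} {DT α : Eis}

theorem IsQuadSym.eq_one_or_eq_neg_one (hquad : IsQuadSym quadSym) {x : Eis}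
    (hα : IsCoprime α (2 * x)) : quadSym x α = 1 ∨ quadSym x α = -1 := by
  induction α using UniqueFactorizationMonoid.induction_on_prime with
  | h₁ => exact absurd (isUnit_of_mul_isUnit_left (isCoprime_zero_left.mp hα)) Eis.not_isUnit_two
  | h₂ u hu => exact .inl (hquad.2.1 x u hu)
  | h₃ a p _ hp ih =>
    have hpx := hα.of_mul_left_left
    rw [hquad.1]
    rcases (hquad.2.2 x p hp hpx.of_mul_right_left hpx.of_mul_right_right.symm).1 with h | h <;>
      rcases ih hα.of_mul_left_right with h' | h' <;> simp [h, h']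

theorem exists_isCubicSymTwo_hexSym_eq_of_prime (hquad : IsQuadSym quadSym)
    (hhex : IsHexSym hexSym) {p : Eis} (hp : Prime p) (hpD : IsCoprime p (6 * DT)) :
    ∃ ω, IsCubicSymTwo p ω ∧ hexSym (4 * DT ^ 3) p = quadSym DT p * ω := by
  have hp6 : IsCoprime p 6 := hpD.of_mul_right_left
  have hpDT : IsCoprime DT p := hpD.of_mul_right_right.symm
  have hp2 : IsCoprime p 2 := hp6.of_isCoprime_of_dvd_right ⟨3, by norm_num⟩
  have hp4 : IsCoprime (4 * DT ^ 3) p :=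
    .mul_left (.of_isCoprime_of_dvd_left (hp2.symm.pow_left (m := 2)) ⟨1, by norm_num⟩)
      hpDT.pow_left
  obtain ⟨F, _, _, f, hf⟩ := Eis.exists_isReduction hp
  have h6 : (6 : F) ≠ 0 := map_ofNat f 6 ▸ hf.map_ne_zero_of_isCoprime hp6.symm
  have h2 : (2 : F) ≠ 0 := map_ofNat f 2 ▸ hf.map_ne_zero_of_isCoprime hp2.symm
  obtain ⟨χ, hχ⟩ := Eis.exists_isPowerResidueChar_six f h6
  have hχ3 : IsPowerResidueChar f 3 (χ ^ 2) := hχ.pow (m := 2)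
  have hχ2 : IsPowerResidueChar f 2 (χ ^ 3) := hχ.pow (m := 3)
  refine ⟨(χ ^ 2) 2, .of_isPowerResidueChar hf hχ3 h2, ?_⟩
  calc hexSym (4 * DT ^ 3) p = χ (f (2 ^ 2 * DT ^ 3)) := by
        rw [hhex.eq_apply hp hp6 hp4 hf hχ]; norm_num
    _ = (χ ^ 3) (f DT) * (χ ^ 2) 2 := by
        rw [MulChar.pow_apply' χ three_ne_zero, MulChar.pow_apply' χ two_ne_zero]
        simp only [map_mul, map_pow, map_ofNat, mul_comm]
    _ = quadSym DT p * (χ ^ 2) 2 := by rw [hquad.eq_apply hp hp2 hpDT hf hχ2]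

theorem exists_isCubicSymTwo_hexSym_eq (hquad : IsQuadSym quadSym) (hhex : IsHexSym hexSym)
    (hα : IsCoprime α (6 * DT)) :
    ∃ ω, IsCubicSymTwo α ω ∧ hexSym (4 * DT ^ 3) α = quadSym DT α * ω := by
  induction α using UniqueFactorizationMonoid.induction_on_prime with
  | h₁ =>
    have h6 : IsUnit (6 : Eis) := isUnit_of_mul_isUnit_left (isCoprime_zero_left.mp hα)
    exact absurd (isUnit_of_dvd_unit ⟨3, by norm_num⟩ h6) Eis.not_isUnit_two
  | h₂ u hu =>
    exact ⟨1, .one_of_isUnit hu, by rw [hhex.2.1 _ u hu, hquad.2.1 _ u hu, one_mul]⟩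
  | h₃ a p _ hp ih =>
    obtain ⟨ω, hω, hωa⟩ := ih hα.of_mul_left_right
    obtain ⟨η, hη, hηp⟩ := exists_isCubicSymTwo_hexSym_eq_of_prime hquad hhex hp hα.of_mul_left_left
    exact ⟨η * ω, hη.mul hω, by rw [hhex.1, hquad.1, hωa, hηp, mul_mul_mul_comm]⟩

end Symbols

theorem hecke_character_value_at_shifted_rep_general
    (α DT : Eis) (hα : (6 : Eis) ∣ α - 1) (hαDT : IsCoprime α DT)
    (quadSym : Eis → Eis → Eis) (hquad : IsQuadSym quadSym)
    (hexSym : Eis → Eis → Eis) (hhex : IsHexSym hexSym)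
    (ψ : Eis → ℂ)
    (hψval : ∀ β, IsCoprime β (6 * DT) → (6 : Eis) ∣ (β - 1) →
      ψ β = conj ((hexSym (4 * DT ^ 3) β : Eis) : ℂ) * (β : ℂ)) :
    ψ α = ((quadSym DT α : Eis) : ℂ) * (α : ℂ) := by
  have hα6 : IsCoprime α 6 := isCoprime_of_dvd_sub_one hα
  obtain ⟨ω, hω, hex_eq⟩ := exists_isCubicSymTwo_hexSym_eq hquad hhex (hα6.mul_right hαDT)
  obtain rfl := hω.eq_one_of_six_dvd_sub_one hα
  have hα2 : IsCoprime α 2 := hα6.of_isCoprime_of_dvd_right ⟨3, by norm_num⟩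
  rw [hψval α (hα6.mul_right hαDT) hα, hex_eq, mul_one]
  rcases hquad.eq_one_or_eq_neg_one (hα2.mul_right hαDT) with h | h <;> simp [h]

/-- From the **proof of Theorem 1.1** in [Qiu]: with `D = π₁⋯πₙ` (`πₖ ≡ 1 (mod 12)`
distinct primes of `ℤ[τ]`), `D_T` a subproduct of the `πₖ`, and `c ∈ O_K` relatively
prime to `D`, the Hecke character `ψ_{D_T³}` attached to `y² = x³ + D_T³` — given on
`α ≡ 1 (mod 6)` prime to `6·D_T` by `ψ_{D_T³}(α) = conj((4D_T³/α)₆)·α` — satisfies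
`ψ_{D_T³}(6c + D) = (D_T/(6c+D))₂ · (6c + D)`. -/
theorem hecke_character_value_at_shifted_rep
    (n : ℕ) (prm : Fin n → Eis)
    (hprime : ∀ k, Prime (prm k))
    (hdistinct : ∀ j k, j ≠ k → prm j ≠ prm k)
    (hcong : ∀ k, (12 : Eis) ∣ (prm k - 1))
    (T : Finset (Fin n))
    (D DT : Eis) (hD : D = ∏ k, prm k) (hDT : DT = ∏ k ∈ T, prm k)
    (c : Eis) (hc : IsCoprime c D)
    (quadSym : Eis → Eis → Eis) (hquad : IsQuadSym quadSym)
    (hexSym : Eis → Eis → Eis) (hhex : IsHexSym hexSym)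
    (ψ : Eis → ℂ)
    (hψval : ∀ α, IsCoprime α (6 * DT) → (6 : Eis) ∣ (α - 1) →
      ψ α = conj ((hexSym (4 * DT ^ 3) α : Eis) : ℂ) * (α : ℂ)) :
    ψ (6 * c + D) = ((quadSym DT (6 * c + D) : Eis) : ℂ) * ((6 * c + D : Eis) : ℂ) := by
  have hD_cong : (6 : Eis) ∣ D - 1 := by
    refine hD ▸ Finset.prod_induction prm (fun x ↦ 6 ∣ x - 1) (fun x y hx hy ↦ ?_) (by simp)
      fun k _ ↦ dvd_trans ⟨2, by norm_num⟩ (hcong k)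
    simpa only [mul_one] using dvd_mul_sub_mul hx hy
  have hDT_dvd : DT ∣ D := hD ▸ hDT ▸ Finset.prod_dvd_prod_of_subset _ _ prm (Finset.subset_univ T)
  have hcop : IsCoprime (6 * c + D) D := by
    simpa only [mul_one] using
      ((isCoprime_of_dvd_sub_one hD_cong).symm.mul_left hc).add_mul_left_left 1
  refine hecke_character_value_at_shifted_rep_general _ DT ?_
    (hcop.of_isCoprime_of_dvd_right hDT_dvd) quadSym hquad hexSym hhex ψ hψval
  simpa only [add_sub_assoc] using (dvd_mul_right 6 c).add hD_cong
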